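/- Let m ≥ 3 be an integer and d > λ₁ a real number. There exists a constant C > 0, depending only on τ, m and d, such that for all real A, B with B − A = d and B ≤ −1, and for every Δ holomorphic on the closed strip Σ_{A,B} = {ζ ∈ ℂ : A ≤ Re ζ ≤ B} with ‖Δ‖_m := sup_{ζ∈Σ_{A,B}} |Δ(ζ)|·|ζ|^m < ∞, there is a holomorphic function φ on Σ_{A,B+λ₁} = {ζ ∈ ℂ : A ≤ Re ζ ≤ B+λ₁} solving φ(ζ+λ) − φ(ζ) = Δ(ζ) for all ζ ∈ Σ_{A,B} and satisfying sup_{ζ∈Σ_{A,B+λ₁}} |φ(ζ)| ≤ C·‖Δ‖_m·I_m, where I_m := ∫_ℝ ds/|B+is|^m. -/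

import Mathlib

open Complex

/-!
The solution is `(2πτ)⁻¹` times the integral of `Δ` along a vertical line against the `λ`-periodic
kernel `1 / (exp ((η - ζ) / τ) - 1)`, the line passing less than `Re λ` to the left of `ζ`.
Replacing `ζ` by `ζ + λ` leaves the kernel unchanged but carries the line across the pole `η = ζ`,
whose residue is responsible for `Δ ζ` in the difference equation.

Choosing the abscissa of the line as an affine function of `Re ζ` keeps it, for `ζ` away from the
two edges, at a definite distance from all poles, so that there the solution is bounded by a
multiple of `sup_c ∫ |Δ(c + iy)| dy`. Near an edge, the difference equation itself expresses the
solution through `Δ` and the value at `ζ ± λ`, which lies away from the edges; this gives both the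
continuous extension to the closed strip and the bound there.
-/

section

open Set Filter Topology MeasureTheory Bornology
open scoped ComplexConjugate

section VerticalLines

lemma sq_norm_add_mul_I (x y : ℝ) : ‖(x : ℂ) + y * I‖ ^ 2 = x ^ 2 + y ^ 2 := by
  rw [norm_add_mul_I, Real.sq_sqrt (by positivity)]

lemma add_mul_I_ne_zero {x : ℝ} (hx : x ≠ 0) (y : ℝ) : (x : ℂ) + y * I ≠ 0 :=
  fun h => hx (by simpa using congrArg re h)

lemma inv_sq_norm_eq_cauchyPDFReal {c : ℝ} (hc : c ≠ 0) (y : ℝ) :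
    (‖(c : ℂ) + y * I‖ ^ 2)⁻¹ =
      Real.pi / |c| * ProbabilityTheory.cauchyPDFReal 0 (Real.nnabs c) y := by
  rw [sq_norm_add_mul_I, ProbabilityTheory.cauchyPDFReal_def, Real.coe_nnabs, sq_abs, sub_zero,
    add_comm (y ^ 2)]
  field_simp

lemma integrable_inv_sq_norm_vertical {c : ℝ} (hc : c ≠ 0) :
    Integrable fun y : ℝ => (‖(c : ℂ) + y * I‖ ^ 2)⁻¹ := by
  simp_rw [inv_sq_norm_eq_cauchyPDFReal hc]
  exact (ProbabilityTheory.integrable_cauchyPDFReal 0).const_mul _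

lemma integral_inv_sq_norm_vertical {c : ℝ} (hc : c ≠ 0) :
    ∫ y : ℝ, (‖(c : ℂ) + y * I‖ ^ 2)⁻¹ = Real.pi / |c| := by
  simp_rw [inv_sq_norm_eq_cauchyPDFReal hc]
  rw [integral_const_mul, ProbabilityTheory.integral_cauchyPDFReal_eq_one 0 (by simpa using hc),
    mul_one]

lemma integrable_inv_sub_inv_vertical_zero {a b : ℝ} (ha : a ≠ 0) (hb : b ≠ 0) :
    Integrable fun y : ℝ => ((b : ℂ) + y * I)⁻¹ - ((a : ℂ) + y * I)⁻¹ := by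
  have hne (y : ℝ) := And.intro (add_mul_I_ne_zero ha y) (add_mul_I_ne_zero hb y)
  have hcont : Continuous fun y : ℝ => ((b : ℂ) + y * I)⁻¹ - ((a : ℂ) + y * I)⁻¹ :=
    (Continuous.inv₀ (by fun_prop) fun y => (hne y).2).sub
      (Continuous.inv₀ (by fun_prop) fun y => (hne y).1)
  refine (((integrable_inv_sq_norm_vertical ha).add
    (integrable_inv_sq_norm_vertical hb)).const_mul |a - b|).mono' hcont.aestronglyMeasurable
    (.of_forall fun y => ?_)
  set u := (a : ℂ) + y * I with hu
  set v := (b : ℂ) + y * I with hv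
  have hsub : u - v = (a - b : ℝ) := by rw [hu, hv]; push_cast; ring
  calc ‖v⁻¹ - u⁻¹‖ = |a - b| * (‖v‖⁻¹ * ‖u‖⁻¹) := by
        rw [inv_sub_inv (hne y).2 (hne y).1, hsub, norm_div, norm_mul, norm_real, Real.norm_eq_abs,
          div_eq_mul_inv, mul_inv]
    _ ≤ |a - b| * ((‖u‖ ^ 2)⁻¹ + (‖v‖ ^ 2)⁻¹) := by
        gcongr
        rw [← inv_pow, ← inv_pow]
        nlinarith [sq_nonneg (‖u‖⁻¹ - ‖v‖⁻¹), sq_nonneg ‖u‖⁻¹, sq_nonneg ‖v‖⁻¹]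

lemma integral_inv_sub_inv_vertical_zero {a b : ℝ} (ha : a < 0) (hb : 0 < b) :
    ∫ y : ℝ, (((b : ℂ) + y * I)⁻¹ - ((a : ℂ) + y * I)⁻¹) = 2 * Real.pi := by
  set q : ℝ → ℂ := fun y => ((b : ℂ) + y * I)⁻¹ - ((a : ℂ) + y * I)⁻¹ with hq
  have hreal : conj (∫ y, q y) = ∫ y, q y := by
    have hconj (y : ℝ) : conj (q y) = q (-y) := by simp [hq]
    rw [← integral_conj, ← integral_neg_eq_self]
    simp_rw [hconj, neg_neg]
  have hre (y : ℝ) : (q y).re =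
      b * (‖(b : ℂ) + y * I‖ ^ 2)⁻¹ - a * (‖(a : ℂ) + y * I‖ ^ 2)⁻¹ := by
    simp [hq, inv_re, normSq_eq_norm_sq, div_eq_mul_inv]
  have hint : (∫ y, q y).re = 2 * Real.pi := by
    calc (∫ y, q y).re = ∫ y, (q y).re :=
          (integral_re (integrable_inv_sub_inv_vertical_zero ha.ne hb.ne')).symm
      _ = b * (Real.pi / |b|) - a * (Real.pi / |a|) := by
          simp_rw [hre]
          rw [integral_sub ((integrable_inv_sq_norm_vertical hb.ne').const_mul b)
            ((integrable_inv_sq_norm_vertical ha.ne).const_mul a), integral_const_mul,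
            integral_const_mul, integral_inv_sq_norm_vertical hb.ne',
            integral_inv_sq_norm_vertical ha.ne]
      _ = 2 * Real.pi := by
          rw [abs_of_pos hb, abs_of_neg ha]
          field_simp [ha.ne]
          ring
  rw [← conj_eq_iff_re.mp hreal, hint]
  push_cast
  rfl

lemma inv_sub_inv_vertical_eq (a b y : ℝ) (ζ : ℂ) :
    (b + y * I - ζ)⁻¹ - (a + y * I - ζ)⁻¹ =
      (((b - ζ.re : ℝ) : ℂ) + (y - ζ.im : ℝ) * I)⁻¹ -
        (((a - ζ.re : ℝ) : ℂ) + (y - ζ.im : ℝ) * I)⁻¹ := by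
  congr 2 <;> apply Complex.ext <;> simp

lemma integrable_inv_sub_inv_vertical {a b : ℝ} {ζ : ℂ} (ha : a ≠ ζ.re) (hb : b ≠ ζ.re) :
    Integrable fun y : ℝ => (b + y * I - ζ)⁻¹ - (a + y * I - ζ)⁻¹ := by
  simp_rw [inv_sub_inv_vertical_eq]
  exact (integrable_inv_sub_inv_vertical_zero (sub_ne_zero.mpr ha)
    (sub_ne_zero.mpr hb)).comp_sub_right ζ.im

lemma integral_inv_sub_inv_vertical {a b : ℝ} {ζ : ℂ} (hζ : ζ.re ∈ Ioo a b) :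
    ∫ y : ℝ, ((b + y * I - ζ)⁻¹ - (a + y * I - ζ)⁻¹) = 2 * Real.pi := by
  simp_rw [inv_sub_inv_vertical_eq]
  rw [integral_sub_right_eq_self fun y : ℝ => (((b - ζ.re : ℝ) : ℂ) + y * I)⁻¹ -
    (((a - ζ.re : ℝ) : ℂ) + y * I)⁻¹]
  exact integral_inv_sub_inv_vertical_zero (sub_neg.mpr hζ.1) (sub_pos.mpr hζ.2)

end VerticalLines

section Strip

variable {E : Type*} [NormedAddCommGroup E] [NormedSpace ℂ E] {f : ℂ → E} {a b : ℝ}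

lemma preimage_re_Icc_mem_nhds {ζ : ℂ} (hζ : ζ.re ∈ Ioo a b) : re ⁻¹' Icc a b ∈ 𝓝 ζ :=
  continuous_re.continuousAt.preimage_mem_nhds (Icc_mem_nhds hζ.1 hζ.2)

lemma tendsto_im_cobounded_strip (a b : ℝ) :
    Tendsto im (cobounded ℂ ⊓ 𝓟 (re ⁻¹' Icc a b)) (cobounded ℝ) := by
  refine hasBasis_cobounded_norm.tendsto_right_iff.mpr fun R _ => ?_
  filter_upwards [(eventually_cobounded_le_norm (max |a| |b| + R)).filter_mono inf_le_left,
    mem_inf_of_right (mem_principal_self _)] with ζ hfar hζ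
  rw [Real.norm_eq_abs]
  linarith [norm_le_abs_re_add_abs_im ζ, abs_le_max_abs_abs hζ.1 hζ.2]

lemma tendsto_intervalIntegral_horizontal (hab : a ≤ b)
    (hf : Tendsto f (cobounded ℂ ⊓ 𝓟 (re ⁻¹' Icc a b)) (𝓝 0)) :
    Tendsto (fun y : ℝ => ∫ x in a..b, f (x + y * I)) (cobounded ℝ) (𝓝 0) := by
  rw [NormedAddGroup.tendsto_nhds_zero] at hf ⊢
  intro ε hε
  have hpos : 0 < b - a + 1 := by linarith
  obtain ⟨R, -, hR⟩ := hasBasis_cobounded_norm.eventually_iff.mp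
    (eventually_inf_principal.mp (hf (ε / (b - a + 1)) (by positivity)))
  filter_upwards [eventually_cobounded_le_norm R] with y hy
  have hsmall (x : ℝ) (hx : x ∈ uIoc a b) : ‖f (x + y * I)‖ ≤ ε / (b - a + 1) := by
    rw [uIoc_of_le hab] at hx
    refine (hR (hy.trans ?_) (by simpa using ⟨hx.1.le, hx.2⟩)).le
    simpa using abs_im_le_norm ((x : ℂ) + y * I)
  calc ‖∫ x in a..b, f (x + y * I)‖ ≤ ε / (b - a + 1) * |b - a| :=
        intervalIntegral.norm_integral_le_of_norm_le_const hsmall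
    _ < ε := by
        rw [abs_of_nonneg (sub_nonneg.mpr hab), div_mul_eq_mul_div, div_lt_iff₀ hpos]
        nlinarith

theorem integral_vertical_sub_eq_zero (hab : a ≤ b) (hc : ContinuousOn f (re ⁻¹' Icc a b))
    (hd : DifferentiableOn ℂ f (re ⁻¹' Ioo a b))
    (h0 : Tendsto f (cobounded ℂ ⊓ 𝓟 (re ⁻¹' Icc a b)) (𝓝 0))
    (hi : Integrable fun y : ℝ => f (b + y * I) - f (a + y * I)) :
    ∫ y : ℝ, (f (b + y * I) - f (a + y * I)) = 0 := by
  have hline {c : ℝ} (hcab : c ∈ Icc a b) : Continuous fun y : ℝ => f (c + y * I) :=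
    hc.comp_continuous (by fun_prop) fun y => by simpa using hcab
  have hrect (T : ℝ) : ∫ y in (-T)..T, (f (b + y * I) - f (a + y * I)) =
      I • ((∫ x in a..b, f (x + (-T : ℝ) * I)) - ∫ x in a..b, f (x + T * I)) := by
    have key := integral_boundary_rect_eq_zero_of_continuousOn_of_differentiableOn f
      (a + (-T : ℝ) * I) (b + T * I)
      (hc.mono fun z hz => by simpa [uIcc_of_le hab] using hz.1)
      (hd.mono fun z hz => by simpa [hab] using hz.1)
    simp only [add_re, ofReal_re, mul_re, I_re, mul_zero, ofReal_im, I_im, mul_one, sub_self,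
      add_zero, add_im, mul_im, zero_add] at key
    rw [intervalIntegral.integral_sub
      ((hline (right_mem_Icc.mpr hab)).intervalIntegrable _ _)
      ((hline (left_mem_Icc.mpr hab)).intervalIntegrable _ _)]
    rw [add_sub_assoc, ← smul_sub, add_eq_zero_iff_eq_neg] at key
    rw [key, smul_neg, smul_smul, I_mul_I, neg_smul, neg_neg, one_smul]
  have hhor := tendsto_intervalIntegral_horizontal hab h0
  have hlim : Tendsto (fun T : ℝ => ∫ y in (-T)..T, (f (b + y * I) - f (a + y * I)))
      atTop (𝓝 0) := by
    simp_rw [hrect]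
    simpa using ((hhor.comp (tendsto_neg_atTop_atBot.mono_right
      IsOrderBornology.atBot_le_cobounded)).sub
      (hhor.mono_left IsOrderBornology.atTop_le_cobounded)).const_smul I
  exact tendsto_nhds_unique
    (intervalIntegral_tendsto_integral hi tendsto_neg_atTop_atBot tendsto_id) hlim

lemma dslope_eq_inv_smul_sub {ζ η : ℂ} (hη : η ≠ ζ) :
    dslope f ζ η = (η - ζ)⁻¹ • f η - (η - ζ)⁻¹ • f ζ := by
  rw [dslope_of_ne f hη, slope_def_module, smul_sub]

lemma tendsto_dslope_zero {ζ : ℂ} {l : Filter ℂ} (hl : l ≤ cobounded ℂ)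
    (h0 : Tendsto (fun η => (η - ζ)⁻¹ • f η) l (𝓝 0)) : Tendsto (dslope f ζ) l (𝓝 0) := by
  have hpole : Tendsto (fun η => (η - ζ)⁻¹ • f ζ) (cobounded ℂ) (𝓝 0) := by
    simpa using (tendsto_inv₀_cobounded.comp (tendsto_sub_const_cobounded ζ)).smul_const (f ζ)
  rw [← sub_zero (0 : E)]
  refine (h0.sub (hpole.mono_left hl)).congr' ?_
  filter_upwards [(eventually_ne_cobounded ζ).filter_mono hl] with η hη
  exact (dslope_eq_inv_smul_sub hη).symm

theorem cauchy_integral_formula_strip [CompleteSpace E] {ζ : ℂ} (hζ : ζ.re ∈ Ioo a b)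
    (hc : ContinuousOn f (re ⁻¹' Icc a b)) (hd : DifferentiableOn ℂ f (re ⁻¹' Ioo a b))
    (h0 : Tendsto (fun η => (η - ζ)⁻¹ • f η) (cobounded ℂ ⊓ 𝓟 (re ⁻¹' Icc a b)) (𝓝 0))
    (ha : Integrable fun y : ℝ => (a + y * I - ζ)⁻¹ • f (a + y * I))
    (hb : Integrable fun y : ℝ => (b + y * I - ζ)⁻¹ • f (b + y * I)) :
    (∫ y : ℝ, (b + y * I - ζ)⁻¹ • f (b + y * I)) - ∫ y : ℝ, (a + y * I - ζ)⁻¹ • f (a + y * I) =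
      (2 * Real.pi : ℂ) • f ζ := by
  have hne {c : ℝ} (hcζ : c ≠ ζ.re) (y : ℝ) : (c : ℂ) + y * I ≠ ζ :=
    fun h => hcζ (by simpa using congrArg re h)
  have hopen : re ⁻¹' Ioo a b ∈ 𝓝 ζ := (isOpen_Ioo.preimage continuous_re).mem_nhds hζ
  have hsplit (y : ℝ) : dslope f ζ (b + y * I) - dslope f ζ (a + y * I) =
      ((b + y * I - ζ)⁻¹ • f (b + y * I) - (a + y * I - ζ)⁻¹ • f (a + y * I)) -
        ((b + y * I - ζ)⁻¹ - (a + y * I - ζ)⁻¹) • f ζ := by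
    rw [dslope_eq_inv_smul_sub (hne hζ.2.ne' y), dslope_eq_inv_smul_sub (hne hζ.1.ne y), sub_smul]
    abel
  have hdiff : Integrable fun y : ℝ =>
      (b + y * I - ζ)⁻¹ • f (b + y * I) - (a + y * I - ζ)⁻¹ • f (a + y * I) := hb.sub ha
  have hpoles : Integrable fun y : ℝ => ((b + y * I - ζ)⁻¹ - (a + y * I - ζ)⁻¹) • f ζ :=
    (integrable_inv_sub_inv_vertical hζ.1.ne hζ.2.ne').smul_const _
  have hzero := integral_vertical_sub_eq_zero (hζ.1.trans hζ.2).le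
    ((continuousOn_dslope (preimage_re_Icc_mem_nhds hζ)).mpr ⟨hc, hd.differentiableAt hopen⟩)
    ((differentiableOn_dslope hopen).mpr hd) (tendsto_dslope_zero inf_le_left h0)
    (by simp_rw [hsplit]; exact hdiff.sub hpoles)
  simp_rw [hsplit] at hzero
  rwa [integral_sub hdiff hpoles, integral_sub hb ha, integral_smul_const,
    integral_inv_sub_inv_vertical hζ, sub_eq_zero] at hzero

end Strip

section Kernel

/-- The step `λ = -2πiτ` of the difference equation. -/
noncomputable def step (τ : ℂ) : ℂ := -(2 * Real.pi * I * τ)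

/-- The `λ`-periodic Cauchy kernel `1 / (exp (w / τ) - 1)`, with simple poles of residue `τ` at the
multiples of `λ`; its junk value there is `0`. -/
noncomputable def expKernel (τ w : ℂ) : ℂ := (exp (w / τ) - 1)⁻¹

variable {τ w : ℂ}

@[simp]
lemma step_re (τ : ℂ) : (step τ).re = 2 * Real.pi * τ.im := by
  simp [step]

lemma step_re_pos (hτ : 0 < τ.im) : 0 < (step τ).re := by
  rw [step_re]
  positivity

lemma ne_zero_of_im_pos (hτ : 0 < τ.im) : τ ≠ 0 := fun h => by simp [h] at hτ

lemma expKernel_sub_step (hτ : τ ≠ 0) (w : ℂ) : expKernel τ (w - step τ) = expKernel τ w := by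
  have hdiv : (w - step τ) / τ = w / τ + 2 * Real.pi * I := by
    rw [step]
    field_simp
    ring
  rw [expKernel, hdiv, exp_periodic, expKernel]

@[fun_prop]
lemma measurable_expKernel (τ : ℂ) : Measurable (expKernel τ) := by
  unfold expKernel
  fun_prop

lemma exp_div_ne_one (hw : w ≠ 0) (hre : |w.re| < (step τ).re) : exp (w / τ) ≠ 1 := by
  have hL : 0 < (step τ).re := (abs_nonneg _).trans_lt hre
  have hτ : τ ≠ 0 := fun h => by simp [h] at hL
  intro hexp
  obtain ⟨n, hn⟩ := exp_eq_one_iff.mp hexp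
  have hwn : w = -n * step τ := by
    rw [(div_eq_iff hτ).mp hn, step]
    ring
  have hn1 : |(n : ℝ)| < 1 := by
    have hre' : |w.re| = |(n : ℝ)| * (step τ).re := by
      rw [hwn, ← ofReal_intCast, ← ofReal_neg, re_ofReal_mul, abs_mul, abs_neg, abs_of_pos hL]
    rw [hre'] at hre
    exact (mul_lt_iff_lt_one_left hL).mp hre
  have hn0 : n = 0 := Int.abs_lt_one_iff.mp (by exact_mod_cast hn1)
  exact hw (by simp [hwn, hn0])

lemma exp_div_ne_one_of_abs_re (h0 : 0 < |w.re|) (hre : |w.re| < (step τ).re) :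
    exp (w / τ) ≠ 1 :=
  exp_div_ne_one (fun h => by simp [h] at h0) hre

lemma hasDerivAt_expKernel (h : exp (w / τ) ≠ 1) :
    HasDerivAt (expKernel τ) (-τ⁻¹ * (expKernel τ w + expKernel τ w ^ 2)) w := by
  have hne : exp (w / τ) - 1 ≠ 0 := sub_ne_zero.mpr h
  refine (((((hasDerivAt_id w).div_const τ).cexp).sub_const 1).inv hne).congr_deriv ?_
  simp only [expKernel, id_eq]
  field_simp
  ring

lemma half_le_norm_exp_sub_one {z : ℂ} (hz : 1 ≤ |z.re|) : 1 / 2 ≤ ‖exp z - 1‖ := by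
  have hreverse : |Real.exp z.re - 1| ≤ ‖exp z - 1‖ := by
    simpa [norm_exp] using abs_norm_sub_norm_le (exp z) 1
  refine le_trans ?_ hreverse
  rcases le_abs.mp hz with h | h
  · linarith [Real.add_one_le_exp z.re, le_abs_self (Real.exp z.re - 1)]
  · have hexp : Real.exp z.re * 2 ≤ 1 := by
      calc Real.exp z.re * 2 ≤ Real.exp z.re * Real.exp (-z.re) := by
            gcongr
            linarith [Real.add_one_le_exp (-z.re)]
        _ = 1 := by rw [← Real.exp_add, add_neg_cancel, Real.exp_zero]
    linarith [neg_abs_le (Real.exp z.re - 1)]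

lemma norm_expKernel_le_two (h : 1 ≤ |(w / τ).re|) : ‖expKernel τ w‖ ≤ 2 := by
  rw [expKernel, norm_inv]
  exact inv_le_of_inv_le₀ two_pos (by simpa using half_le_norm_exp_sub_one h)

lemma eventually_norm_expKernel_le_two (hτ : 0 < τ.im) (R : ℝ) :
    ∀ᶠ w in cobounded ℂ, |w.re| ≤ R → ‖expKernel τ w‖ ≤ 2 := by
  filter_upwards [eventually_cobounded_le_norm (‖τ‖ * (1 + (R + |τ.re|) / τ.im) + 1)]
    with w hw hR
  refine norm_expKernel_le_two ?_
  by_contra! hp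
  set z := w / τ
  have hwz : w = z * τ := (div_mul_cancel₀ w (ne_zero_of_im_pos hτ)).symm
  have hreal : w.re = z.re * τ.re - z.im * τ.im := by rw [hwz, mul_re]
  have hzim : |z.im| ≤ (R + |τ.re|) / τ.im := by
    rw [le_div_iff₀ hτ]
    calc |z.im| * τ.im = |z.re * τ.re - w.re| := by
          rw [hreal, sub_sub_cancel, abs_mul, abs_of_pos hτ]
      _ ≤ |z.re| * |τ.re| + |w.re| := by rw [← abs_mul]; exact abs_sub _ _
      _ ≤ R + |τ.re| := by nlinarith [abs_nonneg τ.re]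
  have hnorm : ‖w‖ ≤ ‖τ‖ * (1 + (R + |τ.re|) / τ.im) := by
    calc ‖w‖ = ‖τ‖ * ‖z‖ := by rw [hwz, norm_mul, mul_comm]
      _ ≤ ‖τ‖ * (1 + (R + |τ.re|) / τ.im) := by
          gcongr
          exact (norm_le_abs_re_add_abs_im z).trans (add_le_add hp.le hzim)
  linarith

theorem exists_norm_expKernel_le (hτ : 0 < τ.im) {σ : ℝ} (hσ : 0 < σ) :
    ∃ κ, 0 < κ ∧ ∀ w, σ ≤ |w.re| → |w.re| ≤ (step τ).re - σ → ‖expKernel τ w‖ ≤ κ := by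
  set S : Set ℂ := {w | σ ≤ |w.re| ∧ |w.re| ≤ (step τ).re - σ}
  obtain ⟨R, -, hR⟩ := hasBasis_cobounded_norm.eventually_iff.mp
    (eventually_norm_expKernel_le_two hτ ((step τ).re - σ))
  have habs : Continuous fun w : ℂ => |w.re| := by fun_prop
  have hSclosed : IsClosed S :=
    (isClosed_le continuous_const habs).inter (isClosed_le habs continuous_const)
  obtain ⟨M, hM⟩ := ((isCompact_closedBall (0 : ℂ) R).inter_right
    hSclosed).exists_bound_of_continuousOn (f := expKernel τ) fun w hw =>
      (hasDerivAt_expKernel (exp_div_ne_one_of_abs_re (hσ.trans_le hw.2.1)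
        (by linarith [hw.2.2]))).continuousAt.continuousWithinAt
  refine ⟨max M 2, by positivity, fun w hw₁ hw₂ => ?_⟩
  rcases le_total R ‖w‖ with hfar | hnear
  · exact (hR hfar hw₂).trans (le_max_right _ _)
  · exact (hM w ⟨mem_closedBall_zero_iff.mpr hnear, hw₁, hw₂⟩).trans (le_max_left _ _)

theorem exists_differentiableOn_expKernel_eq (hτ : 0 < τ.im) :
    ∃ g : ℂ → ℂ, DifferentiableOn ℂ g (re ⁻¹' Ioo (-(step τ).re) (step τ).re) ∧ g 0 = τ ∧
      ∀ w ≠ 0, expKernel τ w = w⁻¹ * g w := by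
  let u : ℂ → ℂ := fun w => exp (w / τ) - 1
  have hu0 : u 0 = 0 := by simp [u]
  have hderiv : dslope u 0 0 = τ⁻¹ := by
    rw [dslope_same]
    exact (((((hasDerivAt_id (0 : ℂ)).div_const τ).cexp).sub_const 1).congr_deriv
      (by simp)).deriv
  have hslope {w : ℂ} (hw : w ≠ 0) : dslope u 0 w = w⁻¹ * u w := by
    rw [dslope_of_ne u hw, slope_def_module, hu0, sub_zero, sub_zero, smul_eq_mul]
  have hne (w : ℂ) (hw : w ∈ re ⁻¹' Ioo (-(step τ).re) (step τ).re) : dslope u 0 w ≠ 0 := by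
    rcases eq_or_ne w 0 with rfl | hw0
    · rw [hderiv]
      exact inv_ne_zero (ne_zero_of_im_pos hτ)
    · rw [hslope hw0]
      exact mul_ne_zero (inv_ne_zero hw0) (sub_ne_zero.mpr (exp_div_ne_one hw0 (abs_lt.mpr hw)))
  have hdiff : Differentiable ℂ u := by fun_prop
  refine ⟨fun w => (dslope u 0 w)⁻¹,
    (((differentiableOn_dslope univ_mem).mpr hdiff.differentiableOn).mono
      (subset_univ _)).inv hne, by simp only [hderiv, inv_inv], fun w hw => ?_⟩
  simp only [hslope hw, mul_inv, inv_inv, inv_mul_cancel_left₀ hw]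
  rfl

end Kernel

section Transform

variable {E : Type*} [NormedAddCommGroup E] [NormedSpace ℂ E] {τ ζ : ℂ} {f : ℂ → E}
  {A B a b c : ℝ}

/-- Functions on the closed strip `A ≤ Re ζ ≤ B` for which Cauchy's theorem holds on the strip:
holomorphic there, vanishing at infinity, and integrable along every vertical line. -/
structure StripDecay (f : ℂ → E) (A B : ℝ) : Prop where
  continuousOn : ContinuousOn f (re ⁻¹' Icc A B)
  differentiableOn : DifferentiableOn ℂ f (re ⁻¹' Ioo A B)
  tendsto_zero : Tendsto f (cobounded ℂ ⊓ 𝓟 (re ⁻¹' Icc A B)) (𝓝 0)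
  integrable : ∀ c ∈ Icc A B, Integrable fun y : ℝ => f (c + y * I)

/-- The `λ`-periodic Cauchy transform of `f` along the vertical line `Re η = c`, not yet divided by
the factor `2πτ` by which it jumps across the line. -/
noncomputable def expTransform (τ : ℂ) (f : ℂ → E) (c : ℝ) (ζ : ℂ) : E :=
  ∫ y : ℝ, expKernel τ (c + y * I - ζ) • f (c + y * I)

lemma StripDecay.mono (hf : StripDecay f A B) (ha : A ≤ a) (hb : b ≤ B) : StripDecay f a b where
  continuousOn := hf.continuousOn.mono (preimage_mono (Icc_subset_Icc ha hb))
  differentiableOn := hf.differentiableOn.mono (preimage_mono (Ioo_subset_Ioo ha hb))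
  tendsto_zero := hf.tendsto_zero.mono_left <| inf_le_inf_left _ <| principal_mono.mpr <|
    preimage_mono (Icc_subset_Icc ha hb)
  integrable c hc := hf.integrable c (Icc_subset_Icc ha hb hc)

lemma StripDecay.tendsto_expKernel_smul (hf : StripDecay f A B) (hτ : 0 < τ.im) (ζ : ℂ) :
    Tendsto (fun η => expKernel τ (η - ζ) • f η) (cobounded ℂ ⊓ 𝓟 (re ⁻¹' Icc A B)) (𝓝 0) := by
  refine IsBoundedUnder.smul_tendsto_zero (isBoundedUnder_of_eventually_le (a := 2) ?_)
    hf.tendsto_zero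
  filter_upwards [((tendsto_sub_const_cobounded ζ).eventually
    (eventually_norm_expKernel_le_two hτ (max |A| |B| + |ζ.re|))).filter_mono inf_le_left,
    mem_inf_of_right (mem_principal_self _)] with η hbound hη
  refine hbound ?_
  calc |(η - ζ).re| ≤ |η.re| + |ζ.re| := abs_sub _ _
    _ ≤ max |A| |B| + |ζ.re| := by gcongr; exact abs_le_max_abs_abs hη.1 hη.2

lemma re_add_mul_I_sub (c y : ℝ) (ζ : ℂ) : ((c : ℂ) + y * I - ζ).re = c - ζ.re := by
  simp

lemma integrable_expKernel_smul (hτ : 0 < τ.im) (h0 : c ≠ ζ.re)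
    (hL : |c - ζ.re| < (step τ).re) (hi : Integrable fun y : ℝ => f (c + y * I)) :
    Integrable fun y : ℝ => expKernel τ (c + y * I - ζ) • f (c + y * I) := by
  obtain ⟨κ, -, hκ⟩ := exists_norm_expKernel_le hτ
    (lt_min (abs_pos.mpr (sub_ne_zero.mpr h0)) (sub_pos.mpr hL))
  refine hi.bdd_smul κ
    ((measurable_expKernel τ).comp (by fun_prop)).aestronglyMeasurable (.of_forall fun y => ?_)
  refine hκ _ ?_ ?_ <;> rw [re_add_mul_I_sub]
  · exact min_le_left _ _
  · linarith [min_le_right |c - ζ.re| ((step τ).re - |c - ζ.re|)]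

lemma norm_expTransform_le {κ : ℝ} (hκ : ∀ w : ℂ, w.re = c - ζ.re → ‖expKernel τ w‖ ≤ κ)
    (hi : Integrable fun y : ℝ => f (c + y * I)) :
    ‖expTransform τ f c ζ‖ ≤ κ * ∫ y : ℝ, ‖f (c + y * I)‖ := by
  rw [← integral_const_mul]
  refine norm_integral_le_of_norm_le (hi.norm.const_mul κ) (.of_forall fun y => ?_)
  rw [norm_smul]
  gcongr
  exact hκ _ (re_add_mul_I_sub c y ζ)

lemma expTransform_add_step (hτ : τ ≠ 0) (f : ℂ → E) (c : ℝ) (ζ : ℂ) :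
    expTransform τ f c (ζ + step τ) = expTransform τ f c ζ := by
  simp only [expTransform, ← sub_sub, expKernel_sub_step hτ]

lemma hasDerivAt_expKernel_const_sub {η : ℂ} (h : exp ((η - ζ) / τ) ≠ 1) :
    HasDerivAt (fun ξ => expKernel τ (η - ξ))
      (τ⁻¹ * (expKernel τ (η - ζ) + expKernel τ (η - ζ) ^ 2)) ζ := by
  refine ((hasDerivAt_expKernel h).comp ζ ((hasDerivAt_id ζ).const_sub η)).congr_deriv ?_
  ring

lemma differentiableAt_expTransform (hτ : 0 < τ.im) (h0 : c ≠ ζ.re)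
    (hL : |c - ζ.re| < (step τ).re) (hi : Integrable fun y : ℝ => f (c + y * I)) :
    DifferentiableAt ℂ (expTransform τ f c) ζ := by
  obtain ⟨σ, hσ, hσmin⟩ :=
    exists_between (lt_min (abs_pos.mpr (sub_ne_zero.mpr h0)) (sub_pos.mpr hL))
  obtain ⟨hσ₁, hσ₂⟩ := lt_min_iff.mp hσmin
  obtain ⟨κ, -, hκ⟩ := exists_norm_expKernel_le hτ hσ
  set U : Set ℂ := {ξ | |c - ξ.re| ∈ Ioo σ ((step τ).re - σ)}
  have hU : U ∈ 𝓝 ζ :=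
    (isOpen_Ioo.preimage (by fun_prop : Continuous fun ξ : ℂ => |c - ξ.re|)).mem_nhds
      ⟨hσ₁, by linarith⟩
  set K' : ℂ → ℂ := fun w => τ⁻¹ * (expKernel τ w + expKernel τ w ^ 2)
  have hK'_le (y : ℝ) {ξ : ℂ} (hξ : ξ ∈ U) :
      ‖K' (c + y * I - ξ)‖ ≤ ‖τ⁻¹‖ * (κ + κ ^ 2) := by
    have hle : ‖expKernel τ (c + y * I - ξ)‖ ≤ κ :=
      hκ _ (by rw [re_add_mul_I_sub]; exact hξ.1.le) (by rw [re_add_mul_I_sub]; exact hξ.2.le)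
    rw [norm_mul]
    gcongr
    exact (norm_add_le _ _).trans (add_le_add hle (by rw [norm_pow]; gcongr))
  have hderiv (y : ℝ) {ξ : ℂ} (hξ : ξ ∈ U) :
      HasDerivAt (fun ξ => expKernel τ (c + y * I - ξ) • f (c + y * I))
        (K' (c + y * I - ξ) • f (c + y * I)) ξ := by
    have hne : exp ((c + y * I - ξ) / τ) ≠ 1 := by
      refine exp_div_ne_one_of_abs_re ?_ ?_ <;> rw [re_add_mul_I_sub]
      · exact hσ.trans hξ.1
      · linarith [hξ.2]
    exact (hasDerivAt_expKernel_const_sub hne).smul_const _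
  have hmeas {k : ℂ → ℂ} (hk : Measurable k) (ξ : ℂ) :
      AEStronglyMeasurable fun y : ℝ => k (c + y * I - ξ) • f (c + y * I) :=
    (hk.comp (by fun_prop)).aestronglyMeasurable.smul hi.aestronglyMeasurable
  exact (hasDerivAt_integral_of_dominated_loc_of_deriv_le hU
    (.of_forall (hmeas (measurable_expKernel τ))) (integrable_expKernel_smul hτ h0 hL hi)
    (F' := fun ξ y => K' (c + y * I - ξ) • f (c + y * I))
    (hmeas (by fun_prop) ζ)
    (.of_forall fun y ξ hξ => (norm_smul_le _ _).trans
      (mul_le_mul_of_nonneg_right (hK'_le y hξ) (norm_nonneg _)))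
    (hi.norm.const_mul _) (.of_forall fun y ξ hξ => hderiv y hξ)).2.differentiableAt

lemma StripDecay.expTransform_eq (hf : StripDecay f a b) (hτ : 0 < τ.im) (hab : a ≤ b)
    (hb : b < ζ.re) (ha : ζ.re < a + (step τ).re) :
    expTransform τ f b ζ = expTransform τ f a ζ := by
  have hdiff : DifferentiableOn ℂ (fun η => expKernel τ (η - ζ)) (re ⁻¹' Icc a b) := by
    intro η hη
    have hneg : (η - ζ).re < 0 := by rw [sub_re]; linarith [hη.2]
    have hlt : |(η - ζ).re| < (step τ).re := by rw [abs_of_neg hneg, sub_re]; linarith [hη.1]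
    exact (((hasDerivAt_expKernel (exp_div_ne_one_of_abs_re (abs_pos.mpr hneg.ne) hlt)).comp η
      ((hasDerivAt_id η).sub_const ζ)).differentiableAt).differentiableWithinAt
  have hint {c : ℝ} (hc : c ∈ Icc a b) :
      Integrable fun y : ℝ => expKernel τ (c + y * I - ζ) • f (c + y * I) :=
    integrable_expKernel_smul hτ (hc.2.trans_lt hb).ne
      (by rw [abs_sub_comm, abs_of_pos] <;> linarith [hc.1, hc.2]) (hf.integrable c hc)
  have hia := hint (left_mem_Icc.mpr hab)
  have hib := hint (right_mem_Icc.mpr hab)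
  have hzero := integral_vertical_sub_eq_zero hab
    (hdiff.continuousOn.smul hf.continuousOn)
    ((hdiff.mono (preimage_mono Ioo_subset_Icc_self)).smul hf.differentiableOn)
    (hf.tendsto_expKernel_smul hτ ζ) (hib.sub hia)
  simp_rw [Pi.smul_apply'] at hzero
  rwa [integral_sub hib hia, sub_eq_zero] at hzero

lemma StripDecay.expTransform_eq_of_mem (hf : StripDecay f A B) (hτ : 0 < τ.im)
    (ha : a ∈ Icc A B) (hb : b ∈ Icc A B) (haζ : ζ.re - a ∈ Ioo 0 (step τ).re)
    (hbζ : ζ.re - b ∈ Ioo 0 (step τ).re) :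
    expTransform τ f a ζ = expTransform τ f b ζ := by
  wlog hab : a ≤ b generalizing a b
  · exact (this hb ha hbζ haζ (le_of_not_ge hab)).symm
  exact ((hf.mono ha.1 hb.2).expTransform_eq hτ hab (sub_pos.mp hbζ.1)
    (sub_lt_iff_lt_add'.mp haζ.2)).symm

theorem StripDecay.expTransform_sub_expTransform [CompleteSpace E] (hf : StripDecay f a b)
    (hτ : 0 < τ.im) (hζ : ζ.re ∈ Ioo a b) (ha : ζ.re < a + (step τ).re)
    (hb : b < ζ.re + (step τ).re) :
    expTransform τ f b ζ - expTransform τ f a ζ = (2 * Real.pi * τ) • f ζ := by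
  obtain ⟨g, hg, hg0, hKg⟩ := exists_differentiableOn_expKernel_eq hτ
  have hshift : MapsTo (· - ζ) (re ⁻¹' Icc a b) (re ⁻¹' Ioo (-(step τ).re) (step τ).re) :=
    fun η hη => by
      simp only [mem_preimage, sub_re]
      exact ⟨by linarith [hη.1], by linarith [hη.2]⟩
  have hgζ : DifferentiableOn ℂ (fun η => g (η - ζ)) (re ⁻¹' Icc a b) :=
    hg.comp (by fun_prop) hshift
  have hsplit {η : ℂ} (hη : η ≠ ζ) :
      (η - ζ)⁻¹ • (g (η - ζ) • f η) = expKernel τ (η - ζ) • f η := by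
    rw [smul_smul, hKg _ (sub_ne_zero.mpr hη)]
  have hline {c : ℝ} (hc : c ≠ ζ.re) (y : ℝ) :
      ((c : ℂ) + y * I - ζ)⁻¹ • (g (c + y * I - ζ) • f (c + y * I)) =
        expKernel τ (c + y * I - ζ) • f (c + y * I) :=
    hsplit fun h => hc (by simpa using congrArg re h)
  have hint {c : ℝ} (hcζ : c ≠ ζ.re) (hc : c ∈ Icc a b) : Integrable fun y : ℝ =>
      ((c : ℂ) + y * I - ζ)⁻¹ • (g (c + y * I - ζ) • f (c + y * I)) := by
    simp_rw [hline hcζ]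
    exact integrable_expKernel_smul hτ hcζ
      (abs_lt.mpr ⟨by linarith [hc.1], by linarith [hc.2]⟩) (hf.integrable c hc)
  have hab : a ≤ b := (hζ.1.trans hζ.2).le
  have hcauchy := cauchy_integral_formula_strip hζ (hgζ.continuousOn.smul hf.continuousOn)
    ((hgζ.mono (preimage_mono Ioo_subset_Icc_self)).smul hf.differentiableOn)
    ((hf.tendsto_expKernel_smul hτ ζ).congr' <|
      ((eventually_ne_cobounded ζ).filter_mono inf_le_left).mono fun η hη => (hsplit hη).symm)
    (hint hζ.1.ne (left_mem_Icc.mpr hab)) (hint hζ.2.ne' (right_mem_Icc.mpr hab))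
  simp_rw [Pi.smul_apply', hline hζ.1.ne, hline hζ.2.ne', sub_self, hg0, smul_smul] at hcauchy
  exact hcauchy

end Transform

section Contour

variable {A B L x δ : ℝ}

/-- The abscissa of the vertical line used at points with real part `x`: the affine map from
`[A, B + L]` onto `[A, B]`, so that the line lies strictly between `x - L` and `x`. -/
noncomputable def contourAbscissa (A B L x : ℝ) : ℝ :=
  A + (x - A) * ((B - A) / (B - A + L))

lemma sub_contourAbscissa (h : B - A + L ≠ 0) :
    x - contourAbscissa A B L x = (x - A) * (L / (B - A + L)) := by
  unfold contourAbscissa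
  field_simp
  ring

lemma contourAbscissa_mem_Icc (hAB : A ≤ B) (hL : 0 < L) (hx : x ∈ Icc A (B + L)) :
    contourAbscissa A B L x ∈ Icc A B := by
  have hpos : 0 < B - A + L := by linarith
  refine ⟨le_add_of_nonneg_right (mul_nonneg (sub_nonneg.mpr hx.1) (by bound)), ?_⟩
  calc A + (x - A) * ((B - A) / (B - A + L)) ≤ A + (B - A + L) * ((B - A) / (B - A + L)) := by
        gcongr
        linarith [hx.2]
    _ = B := by rw [mul_div_cancel₀ _ hpos.ne', add_sub_cancel]

lemma sub_contourAbscissa_mem_Icc (hAB : A ≤ B) (hL : 0 < L)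
    (hx : x ∈ Icc (A + δ) (B + L - δ)) :
    x - contourAbscissa A B L x ∈
      Icc (δ * (L / (B - A + L))) (L - δ * (L / (B - A + L))) := by
  have hpos : 0 < B - A + L := by linarith
  rw [sub_contourAbscissa hpos.ne']
  refine ⟨by gcongr; linarith [hx.1], ?_⟩
  calc (x - A) * (L / (B - A + L)) ≤ (B - A + L - δ) * (L / (B - A + L)) :=
        mul_le_mul_of_nonneg_right (by linarith [hx.2]) (by positivity)
    _ = L - δ * (L / (B - A + L)) := by rw [sub_mul, mul_div_cancel₀ _ hpos.ne']

lemma sub_contourAbscissa_mem_Ioo (hAB : A ≤ B) (hL : 0 < L) (hx : x ∈ Ioo A (B + L)) :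
    x - contourAbscissa A B L x ∈ Ioo 0 L := by
  obtain ⟨δ, hδ, hδmin⟩ := exists_between (lt_min (sub_pos.mpr hx.1) (sub_pos.mpr hx.2))
  obtain ⟨hδ₁, hδ₂⟩ := lt_min_iff.mp hδmin
  have hmem := sub_contourAbscissa_mem_Icc (x := x) (δ := δ) hAB hL
    ⟨by linarith, by linarith⟩
  have hmargin : 0 < δ * (L / (B - A + L)) := mul_pos hδ (div_pos hL (by linarith))
  exact ⟨hmargin.trans_le hmem.1, by linarith [hmem.2]⟩

end Contour

section Solution

variable {E : Type*} [NormedAddCommGroup E] [NormedSpace ℂ E] {τ ζ : ℂ} {f : ℂ → E} {A B : ℝ}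

/-- The solution of the difference equation on the open strip `A < Re ζ < B + Re λ`: replacing `ζ`
by `ζ + λ` moves the contour from the left of the pole `ζ` to its right. -/
noncomputable def stripSolution (τ : ℂ) (A B : ℝ) (f : ℂ → E) (ζ : ℂ) : E :=
  (2 * Real.pi * τ)⁻¹ • expTransform τ f (contourAbscissa A B (step τ).re ζ.re) ζ

lemma StripDecay.differentiableAt_stripSolution (hf : StripDecay f A B) (hτ : 0 < τ.im)
    (hAB : A ≤ B) (hζ : ζ.re ∈ Ioo A (B + (step τ).re)) :
    DifferentiableAt ℂ (stripSolution τ A B f) ζ := by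
  have hL := step_re_pos hτ
  set c := contourAbscissa A B (step τ).re ζ.re
  have hc : c ∈ Icc A B := contourAbscissa_mem_Icc hAB hL (Ioo_subset_Icc_self hζ)
  have hcζ : ζ.re - c ∈ Ioo 0 (step τ).re := sub_contourAbscissa_mem_Ioo hAB hL hζ
  have hconst : stripSolution τ A B f =ᶠ[𝓝 ζ]
      fun ξ => (2 * Real.pi * τ)⁻¹ • expTransform τ f c ξ := by
    filter_upwards [(isOpen_Ioo.preimage continuous_re).mem_nhds hζ,
      (isOpen_Ioo.preimage (continuous_re.sub continuous_const)).mem_nhds hcζ] with ξ hξ hξc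
    rw [stripSolution, hf.expTransform_eq_of_mem hτ
      (contourAbscissa_mem_Icc hAB hL (Ioo_subset_Icc_self hξ)) hc
      (sub_contourAbscissa_mem_Ioo hAB hL hξ) hξc]
  refine hconst.differentiableAt_iff.mpr (DifferentiableAt.const_smul ?_ _)
  refine differentiableAt_expTransform hτ (sub_pos.mp hcζ.1).ne ?_ (hf.integrable c hc)
  rw [abs_sub_comm, abs_of_pos hcζ.1]
  exact hcζ.2

lemma StripDecay.stripSolution_add_step_sub [CompleteSpace E] (hf : StripDecay f A B)
    (hτ : 0 < τ.im) (hζ : ζ.re ∈ Ioo A B) :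
    stripSolution τ A B f (ζ + step τ) - stripSolution τ A B f ζ = f ζ := by
  have hL := step_re_pos hτ
  have hτ0 := ne_zero_of_im_pos hτ
  have hAB : A ≤ B := (hζ.1.trans hζ.2).le
  have hζ₀ : ζ.re ∈ Ioo A (B + (step τ).re) := ⟨hζ.1, by linarith [hζ.2]⟩
  have hζ₁ : (ζ + step τ).re ∈ Ioo A (B + (step τ).re) := by
    rw [add_re]
    exact ⟨by linarith [hζ.1], by linarith [hζ.2]⟩
  have hc₀ := contourAbscissa_mem_Icc hAB hL (Ioo_subset_Icc_self hζ₀)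
  have hc₁ := contourAbscissa_mem_Icc hAB hL (Ioo_subset_Icc_self hζ₁)
  have hsub₀ := sub_contourAbscissa_mem_Ioo hAB hL hζ₀
  have hsub₁ := sub_contourAbscissa_mem_Ioo hAB hL hζ₁
  unfold stripSolution
  rw [expTransform_add_step hτ0, ← smul_sub]
  set c₁ := contourAbscissa A B (step τ).re (ζ + step τ).re
  rw [add_re] at hsub₁
  rw [(hf.mono hc₀.1 hc₁.2).expTransform_sub_expTransform hτ
    ⟨by linarith [hsub₀.1], by linarith [hsub₁.2]⟩ (by linarith [hsub₀.2])
    (by linarith [hsub₁.1])]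
  exact inv_smul_smul₀ (by simp [hτ0, Real.pi_ne_zero]) _

theorem exists_norm_stripSolution_le (hτ : 0 < τ.im) {d δ : ℝ} (hd : 0 ≤ d) (hδ : 0 < δ) :
    ∃ κ, 0 < κ ∧ ∀ A B : ℝ, B - A = d → ∀ f : ℂ → E, StripDecay f A B →
      ∀ W, (∀ c ∈ Icc A B, ∫ y : ℝ, ‖f (c + y * I)‖ ≤ W) →
        ∀ ζ : ℂ, ζ.re ∈ Icc (A + δ) (B + (step τ).re - δ) →
          ‖stripSolution τ A B f ζ‖ ≤ κ * W := by
  have hL := step_re_pos hτ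
  have hτ0 := ne_zero_of_im_pos hτ
  have hσ : 0 < δ * ((step τ).re / (d + (step τ).re)) := by positivity
  obtain ⟨κ, hκ0, hκ⟩ := exists_norm_expKernel_le hτ hσ
  have hfactor : 0 < ‖(2 * Real.pi * τ)⁻¹‖ := by simp [hτ0, Real.pi_ne_zero]
  refine ⟨‖(2 * Real.pi * τ)⁻¹‖ * κ, by positivity, ?_⟩
  rintro A B rfl f hf W hW ζ hζ
  have hAB : A ≤ B := sub_nonneg.mp hd
  have hmem := contourAbscissa_mem_Icc hAB hL (x := ζ.re) ⟨by linarith [hζ.1], by linarith [hζ.2]⟩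
  have hsub := sub_contourAbscissa_mem_Icc hAB hL hζ
  set c := contourAbscissa A B (step τ).re ζ.re
  rw [stripSolution, norm_smul, mul_assoc _ κ]
  gcongr
  calc ‖expTransform τ f c ζ‖ ≤ κ * ∫ y : ℝ, ‖f (c + y * I)‖ := by
        refine norm_expTransform_le (fun w hw => ?_) (hf.integrable c hmem)
        have habs : |w.re| = ζ.re - c := by
          rw [hw, abs_sub_comm, abs_of_nonneg (hσ.le.trans hsub.1)]
        exact hκ w (habs ▸ hsub.1) (habs ▸ hsub.2)
    _ ≤ κ * W := by gcongr; exact hW c hmem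

end Solution

section Extension

variable {E : Type*} [NormedAddCommGroup E] {φ f : ℂ → E} {l : ℂ} {A B : ℝ}

lemma exists_tendsto_of_add_sub_eq (hl : 0 < l.re) (hAB : A < B)
    (hφ : ContinuousOn φ (re ⁻¹' Ioo A (B + l.re))) (hf : ContinuousOn f (re ⁻¹' Icc A B))
    (heq : ∀ ζ : ℂ, ζ.re ∈ Ioo A B → φ (ζ + l) - φ ζ = f ζ) {ζ : ℂ}
    (hζ : ζ.re ∈ Icc A (B + l.re)) :
    ∃ y, Tendsto φ (𝓝[re ⁻¹' Ioo A (B + l.re)] ζ) (𝓝 y) := by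
  set S : Set ℂ := re ⁻¹' Ioo A (B + l.re)
  have hφ_at {ξ : ℂ} (hξ : ξ ∈ S) : ContinuousAt φ ξ :=
    hφ.continuousAt ((isOpen_Ioo.preimage continuous_re).mem_nhds hξ)
  rcases eq_endpoints_or_mem_Ioo_of_mem_Icc hζ with hleft | hright | hmid
  · have hnear : ∀ᶠ ξ in 𝓝[S] ζ, ξ.re ∈ Ioo A B := by
      filter_upwards [self_mem_nhdsWithin, nhdsWithin_le_nhds
        ((isOpen_Iio.preimage continuous_re).mem_nhds (hleft.trans_lt hAB))] with ξ hξ hξB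
      exact ⟨hξ.1, hξB⟩
    have hshift : Tendsto (fun ξ => φ (ξ + l)) (𝓝[S] ζ) (𝓝 (φ (ζ + l))) :=
      (ContinuousAt.comp (f := (· + l)) (hφ_at ⟨by rw [add_re]; linarith, by
        rw [add_re]; linarith⟩) (by fun_prop)).tendsto.mono_left nhdsWithin_le_nhds
    have hf_lim : Tendsto f (𝓝[S] ζ) (𝓝 (f ζ)) :=
      (hf ζ ⟨hζ.1, hleft.trans_le hAB.le⟩).mono_left
        (nhdsWithin_le_of_mem (hnear.mono fun ξ hξ => Ioo_subset_Icc_self hξ))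
    exact ⟨_, (hshift.sub hf_lim).congr' (hnear.mono fun ξ hξ => by rw [← heq ξ hξ]; abel)⟩
  · have hsub : Tendsto (· - l) (𝓝[S] ζ) (𝓝 (ζ - l)) :=
      (by fun_prop : Continuous (· - l)).continuousAt.tendsto.mono_left nhdsWithin_le_nhds
    have hre : (ζ - l).re = B := by rw [sub_re, hright, add_sub_cancel_right]
    have hnear : ∀ᶠ ξ in 𝓝[S] ζ, (ξ - l).re ∈ Ioo A B := by
      filter_upwards [self_mem_nhdsWithin, hsub.eventually
        ((isOpen_Ioi.preimage continuous_re).mem_nhds (hAB.trans_eq hre.symm))] with ξ hξ hξA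
      exact ⟨hξA, by rw [sub_re]; linarith [hξ.2]⟩
    have hshift : Tendsto (fun ξ => φ (ξ - l)) (𝓝[S] ζ) (𝓝 (φ (ζ - l))) :=
      (hφ_at (ξ := ζ - l) ⟨hre ▸ hAB, by linarith⟩).tendsto.comp hsub
    have hf_lim : Tendsto (fun ξ => f (ξ - l)) (𝓝[S] ζ) (𝓝 (f (ζ - l))) :=
      (hf (ζ - l) ⟨hre ▸ hAB.le, hre.le⟩).tendsto.comp (tendsto_nhdsWithin_iff.mpr
        ⟨hsub, hnear.mono fun ξ hξ => Ioo_subset_Icc_self hξ⟩)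
    refine ⟨_, (hshift.add hf_lim).congr' (hnear.mono fun ξ hξ => ?_)⟩
    rw [← heq _ hξ, sub_add_cancel]
    abel
  · exact ⟨_, hφ ζ hmid⟩

lemma exists_continuousOn_Icc_add_sub_eq (hl : 0 < l.re) (hAB : A < B)
    (hφ : ContinuousOn φ (re ⁻¹' Ioo A (B + l.re))) (hf : ContinuousOn f (re ⁻¹' Icc A B))
    (heq : ∀ ζ : ℂ, ζ.re ∈ Ioo A B → φ (ζ + l) - φ ζ = f ζ) :
    ∃ ψ : ℂ → E, ContinuousOn ψ (re ⁻¹' Icc A (B + l.re)) ∧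
      EqOn ψ φ (re ⁻¹' Ioo A (B + l.re)) ∧
      ∀ ζ : ℂ, ζ.re ∈ Icc A B → ψ (ζ + l) - ψ ζ = f ζ := by
  set ψ := extendFrom (re ⁻¹' Ioo A (B + l.re)) φ
  have hψφ : EqOn ψ φ (re ⁻¹' Ioo A (B + l.re)) := extendFrom_extends hφ
  have hψ : ContinuousOn ψ (re ⁻¹' Icc A (B + l.re)) := by
    refine continuousOn_extendFrom ?_ fun ζ hζ => exists_tendsto_of_add_sub_eq hl hAB hφ hf heq hζ
    rw [closure_preimage_re, closure_Ioo (by linarith)]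
  have hψ_eq : EqOn (fun ζ => ψ (ζ + l) - ψ ζ) f (re ⁻¹' Ioo A B) := fun ζ hζ => by
    have hζ₀ : ζ ∈ re ⁻¹' Ioo A (B + l.re) := ⟨hζ.1, by linarith [hζ.2]⟩
    have hζ₁ : ζ + l ∈ re ⁻¹' Ioo A (B + l.re) := by
      rw [mem_preimage, add_re]
      exact ⟨by linarith [hζ.1], by linarith [hζ.2]⟩
    simp only [hψφ hζ₀, hψφ hζ₁, heq ζ hζ]
  have hψ_sub : ContinuousOn (fun ζ => ψ (ζ + l) - ψ ζ) (re ⁻¹' Icc A B) :=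
    (hψ.comp (by fun_prop) fun ζ hζ =>
      ⟨by rw [add_re]; linarith [hζ.1], by rw [add_re]; linarith [hζ.2]⟩).sub
      (hψ.mono (preimage_mono (Icc_subset_Icc_right (by linarith))))
  have hψ_step : EqOn (fun ζ => ψ (ζ + l) - ψ ζ) f (re ⁻¹' Icc A B) :=
    hψ_eq.of_subset_closure hψ_sub hf (preimage_mono Ioo_subset_Icc_self)
      (by rw [closure_preimage_re, closure_Ioo hAB.ne])
  exact ⟨ψ, hψ, hψφ, hψ_step⟩

lemma norm_le_add_of_add_sub_eq {K M δ : ℝ} (hM0 : 0 ≤ M) (hδ0 : 0 ≤ δ) (hδl : δ ≤ l.re)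
    (hδ : 2 * δ ≤ B - A)
    (heq : ∀ ζ : ℂ, ζ.re ∈ Icc A B → φ (ζ + l) - φ ζ = f ζ)
    (hK : ∀ ζ : ℂ, ζ.re ∈ Icc (A + δ) (B + l.re - δ) → ‖φ ζ‖ ≤ K)
    (hM : ∀ ζ : ℂ, ζ.re ∈ Icc A B → ‖f ζ‖ ≤ M) {ζ : ℂ} (hζ : ζ.re ∈ Icc A (B + l.re)) :
    ‖φ ζ‖ ≤ K + M := by
  rcases lt_or_ge ζ.re (A + δ) with hleft | hA
  · have hmem : ζ.re ∈ Icc A B := ⟨hζ.1, by linarith⟩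
    have hcore := hK (ζ + l) ⟨by rw [add_re]; linarith [hζ.1], by rw [add_re]; linarith⟩
    rw [← sub_sub_cancel (φ (ζ + l)) (φ ζ), heq ζ hmem]
    exact (norm_sub_le _ _).trans (add_le_add hcore (hM ζ hmem))
  rcases le_or_gt ζ.re (B + l.re - δ) with hB | hright
  · exact (hK ζ ⟨hA, hB⟩).trans (le_add_of_nonneg_right hM0)
  · have hmem : (ζ - l).re ∈ Icc A B := by
      rw [sub_re]
      exact ⟨by linarith, by linarith [hζ.2]⟩
    have hcore := hK (ζ - l) ⟨by rw [sub_re]; linarith, by rw [sub_re]; linarith [hζ.2]⟩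
    have hstep : φ ζ = φ (ζ - l) + f (ζ - l) := by
      rw [← heq _ hmem, sub_add_cancel, add_sub_cancel]
    rw [hstep]
    exact (norm_add_le _ _).trans (add_le_add hcore (hM _ hmem))

end Extension

section Existence

variable {E : Type*} [NormedAddCommGroup E] [NormedSpace ℂ E] [CompleteSpace E] {τ : ℂ}

theorem exists_solution_norm_le (hτ : 0 < τ.im) {d : ℝ} (hd : 0 < d) :
    ∃ κ, 0 < κ ∧ ∀ A B : ℝ, B - A = d → ∀ f : ℂ → E, StripDecay f A B →
      ∀ M W, (∀ ζ : ℂ, ζ.re ∈ Icc A B → ‖f ζ‖ ≤ M) →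
        (∀ c ∈ Icc A B, ∫ y : ℝ, ‖f (c + y * I)‖ ≤ W) →
        ∃ φ : ℂ → E, ContinuousOn φ (re ⁻¹' Icc A (B + (step τ).re)) ∧
          DifferentiableOn ℂ φ (re ⁻¹' Ioo A (B + (step τ).re)) ∧
          (∀ ζ : ℂ, ζ.re ∈ Icc A B → φ (ζ + step τ) - φ ζ = f ζ) ∧
          ∀ ζ : ℂ, ζ.re ∈ Icc A (B + (step τ).re) → ‖φ ζ‖ ≤ κ * W + M := by
  have hL := step_re_pos hτ
  set δ := min (step τ).re (d / 2)
  have hδ : 0 < δ := lt_min hL (half_pos hd)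
  obtain ⟨κ, hκ0, hκ⟩ := exists_norm_stripSolution_le (E := E) hτ hd.le hδ
  refine ⟨κ, hκ0, ?_⟩
  rintro A B rfl f hf M W hM hW
  have hAB : A < B := sub_pos.mp hd
  have hM0 : 0 ≤ M := (norm_nonneg _).trans (hM A (left_mem_Icc.mpr hAB.le))
  have hdiff : DifferentiableOn ℂ (stripSolution τ A B f) (re ⁻¹' Ioo A (B + (step τ).re)) :=
    fun ζ hζ => (hf.differentiableAt_stripSolution hτ hAB.le hζ).differentiableWithinAt
  obtain ⟨φ, hφ, hφ_eq, hφ_step⟩ := exists_continuousOn_Icc_add_sub_eq hL hAB hdiff.continuousOn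
    hf.continuousOn fun ζ hζ => hf.stripSolution_add_step_sub hτ hζ
  refine ⟨φ, hφ, hdiff.congr hφ_eq, hφ_step, fun ζ hζ => ?_⟩
  refine norm_le_add_of_add_sub_eq hM0 hδ.le (min_le_left _ _)
    (by linarith [min_le_right (step τ).re ((B - A) / 2)]) hφ_step (fun ξ hξ => ?_) hM hζ
  rw [hφ_eq ⟨by linarith [hξ.1], by linarith [hξ.2]⟩]
  exact hκ A B rfl f hf W hW ξ hξ

end Existence

section Weights

variable {E : Type*} [NormedAddCommGroup E] {f : ℂ → E} {A B b N : ℝ} {m : ℕ}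

lemma norm_add_mul_I_le_of_le {c : ℝ} (hcB : c ≤ B) (hB : B ≤ 0) (y : ℝ) :
    ‖(B : ℂ) + y * I‖ ≤ ‖(c : ℂ) + y * I‖ := by
  rw [← sq_le_sq₀ (norm_nonneg _) (norm_nonneg _), sq_norm_add_mul_I, sq_norm_add_mul_I]
  nlinarith

lemma abs_le_norm_add_mul_I (x y : ℝ) : |x| ≤ ‖(x : ℂ) + y * I‖ := by
  simpa using abs_re_le_norm ((x : ℂ) + y * I)

lemma integrable_inv_norm_pow_vertical (hB : B ≠ 0) (hm : 2 ≤ m) :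
    Integrable fun y : ℝ => (‖(B : ℂ) + y * I‖ ^ m)⁻¹ := by
  have hne (y : ℝ) : ‖(B : ℂ) + y * I‖ ^ m ≠ 0 :=
    pow_ne_zero _ (norm_ne_zero_iff.mpr (add_mul_I_ne_zero hB y))
  refine ((integrable_inv_sq_norm_vertical hB).const_mul (|B| ^ (m - 2))⁻¹).mono'
    (Continuous.inv₀ (by fun_prop) hne).aestronglyMeasurable (.of_forall fun y => ?_)
  rw [norm_inv, norm_pow, norm_norm, ← mul_inv, ← Nat.sub_add_cancel hm, pow_add,
    Nat.add_sub_cancel]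
  have hn := norm_pos_iff.mpr (add_mul_I_ne_zero hB y)
  gcongr
  exact abs_le_norm_add_mul_I B y

lemma inv_abs_pow_le_integral_vertical (hb : 0 < b) (hB : b ≤ |B|) (hm : 2 ≤ m) :
    (|B| ^ m)⁻¹ ≤ 2 ^ m / (2 * b) * ∫ y : ℝ, (‖(B : ℂ) + y * I‖ ^ m)⁻¹ := by
  have hB0 : 0 < |B| := hb.trans_le hB
  have hint := integrable_inv_norm_pow_vertical (abs_pos.mp hB0) hm
  have hlower (y : ℝ) (hy : y ∈ Icc (-b) b) :
      ((2 * |B|) ^ m)⁻¹ ≤ (‖(B : ℂ) + y * I‖ ^ m)⁻¹ := by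
    have hn := norm_pos_iff.mpr (add_mul_I_ne_zero (abs_pos.mp hB0) y)
    gcongr
    have hle := norm_le_abs_re_add_abs_im ((B : ℂ) + y * I)
    simp only [add_re, ofReal_re, re_ofReal_mul, I_re, mul_zero, add_zero, add_im, ofReal_im,
      im_ofReal_mul, I_im, mul_one, zero_add] at hle
    linarith [abs_le.mpr hy]
  have hsegment : ((2 * |B|) ^ m)⁻¹ * (2 * b) ≤ ∫ y : ℝ, (‖(B : ℂ) + y * I‖ ^ m)⁻¹ := by
    calc ((2 * |B|) ^ m)⁻¹ * (2 * b) = ∫ _ in Icc (-b) b, ((2 * |B|) ^ m)⁻¹ := by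
          rw [setIntegral_const, Real.volume_real_Icc_of_le (by linarith), smul_eq_mul]
          ring
      _ ≤ ∫ y in Icc (-b) b, (‖(B : ℂ) + y * I‖ ^ m)⁻¹ :=
          setIntegral_mono_on (by simp) hint.integrableOn measurableSet_Icc hlower
      _ ≤ ∫ y : ℝ, (‖(B : ℂ) + y * I‖ ^ m)⁻¹ :=
          setIntegral_le_integral hint (.of_forall fun y => by positivity)
  calc (|B| ^ m)⁻¹ = 2 ^ m / (2 * b) * (((2 * |B|) ^ m)⁻¹ * (2 * b)) := by
        rw [mul_pow]
        field_simp
    _ ≤ _ := by gcongr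

lemma tendsto_inv_norm_pow_vertical (B : ℝ) (hm : m ≠ 0) :
    Tendsto (fun y : ℝ => (‖(B : ℂ) + y * I‖ ^ m)⁻¹) (cobounded ℝ) (𝓝 0) := by
  have hnorm : Tendsto (fun y : ℝ => ‖(B : ℂ) + y * I‖) (cobounded ℝ) atTop :=
    tendsto_atTop_mono (fun y => by simpa using abs_im_le_norm ((B : ℂ) + y * I))
      tendsto_norm_cobounded_atTop
  exact tendsto_inv_atTop_zero.comp ((tendsto_pow_atTop hm).comp hnorm)

lemma norm_le_mul_inv_norm_pow (hB : B < 0)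
    (hN : ∀ ζ : ℂ, ζ.re ∈ Icc A B → ‖f ζ‖ * ‖ζ‖ ^ m ≤ N) {ζ : ℂ} (hζ : ζ.re ∈ Icc A B) :
    ‖f ζ‖ ≤ N * (‖(B : ℂ) + ζ.im * I‖ ^ m)⁻¹ := by
  have hpos := norm_pos_iff.mpr (add_mul_I_ne_zero hB.ne ζ.im)
  have hle : ‖(B : ℂ) + ζ.im * I‖ ≤ ‖ζ‖ := by
    simpa only [re_add_im] using norm_add_mul_I_le_of_le hζ.2 hB.le ζ.im
  rw [← div_eq_mul_inv, le_div_iff₀ (by positivity)]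
  calc ‖f ζ‖ * ‖(B : ℂ) + ζ.im * I‖ ^ m ≤ ‖f ζ‖ * ‖ζ‖ ^ m := by gcongr
    _ ≤ N := hN ζ hζ

lemma integral_norm_vertical_le (hB : B < 0) (hm : 2 ≤ m)
    (hN : ∀ ζ : ℂ, ζ.re ∈ Icc A B → ‖f ζ‖ * ‖ζ‖ ^ m ≤ N) {c : ℝ} (hc : c ∈ Icc A B) :
    ∫ y : ℝ, ‖f (c + y * I)‖ ≤ N * ∫ y : ℝ, (‖(B : ℂ) + y * I‖ ^ m)⁻¹ := by
  rw [← integral_const_mul]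
  refine integral_mono_of_nonneg (.of_forall fun y => norm_nonneg _)
    ((integrable_inv_norm_pow_vertical hB.ne hm).const_mul N) (.of_forall fun y => ?_)
  simpa using norm_le_mul_inv_norm_pow hB hN (ζ := c + y * I) (by simpa using hc)

lemma norm_le_mul_integral (hb : 0 < b) (hB : B ≤ -b) (hm : 2 ≤ m)
    (hN : ∀ ζ : ℂ, ζ.re ∈ Icc A B → ‖f ζ‖ * ‖ζ‖ ^ m ≤ N) {ζ : ℂ} (hζ : ζ.re ∈ Icc A B) :
    ‖f ζ‖ ≤ 2 ^ m / (2 * b) * (N * ∫ y : ℝ, (‖(B : ℂ) + y * I‖ ^ m)⁻¹) := by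
  have hB0 : B < 0 := by linarith
  have hN0 : 0 ≤ N := le_trans (by positivity) (hN ζ hζ)
  have hB_abs : 0 < |B| := abs_pos.mpr hB0.ne
  calc ‖f ζ‖ ≤ N * (‖(B : ℂ) + ζ.im * I‖ ^ m)⁻¹ := norm_le_mul_inv_norm_pow hB0 hN hζ
    _ ≤ N * (|B| ^ m)⁻¹ := by
        gcongr
        exact abs_le_norm_add_mul_I B ζ.im
    _ ≤ N * (2 ^ m / (2 * b) * ∫ y : ℝ, (‖(B : ℂ) + y * I‖ ^ m)⁻¹) := by
        gcongr
        exact inv_abs_pow_le_integral_vertical hb (by rw [abs_of_neg hB0]; linarith) hm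
    _ = _ := by ring

lemma StripDecay.of_norm_mul_pow_le [NormedSpace ℂ E] (hB : B < 0) (hm : 2 ≤ m)
    (hc : ContinuousOn f (re ⁻¹' Icc A B)) (hd : DifferentiableOn ℂ f (re ⁻¹' Ioo A B))
    (hN : ∀ ζ : ℂ, ζ.re ∈ Icc A B → ‖f ζ‖ * ‖ζ‖ ^ m ≤ N) : StripDecay f A B where
  continuousOn := hc
  differentiableOn := hd
  tendsto_zero := by
    have hweight : Tendsto (fun y : ℝ => N * (‖(B : ℂ) + y * I‖ ^ m)⁻¹) (cobounded ℝ) (𝓝 0) := by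
      simpa using (tendsto_inv_norm_pow_vertical B (by omega)).const_mul N
    refine squeeze_zero_norm' ?_ (hweight.comp (tendsto_im_cobounded_strip A B))
    filter_upwards [mem_inf_of_right (mem_principal_self _)] with ζ hζ
    exact norm_le_mul_inv_norm_pow hB hN hζ
  integrable c hcAB := by
    have hline : Continuous fun y : ℝ => f (c + y * I) :=
      hc.comp_continuous (by fun_prop) fun y => by simpa using hcAB
    refine ((integrable_inv_norm_pow_vertical hB.ne hm).const_mul N).mono'
      hline.aestronglyMeasurable (.of_forall fun y => ?_)
    simpa using norm_le_mul_inv_norm_pow hB hN (ζ := c + y * I) (by simpa using hcAB)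

end Weights

theorem statement11_general {E : Type*} [NormedAddCommGroup E] [NormedSpace ℂ E] [CompleteSpace E]
    {τ : ℂ} (hτ : 0 < τ.im) {m : ℕ} (hm : 2 ≤ m) {d b : ℝ} (hd : 0 < d) (hb : 0 < b) :
    ∃ C : ℝ, 0 < C ∧
      ∀ A B : ℝ, B - A = d → B ≤ -b →
        ∀ Δ : ℂ → E,
          ContinuousOn Δ {ζ : ℂ | A ≤ ζ.re ∧ ζ.re ≤ B} →
          DifferentiableOn ℂ Δ (interior {ζ : ℂ | A ≤ ζ.re ∧ ζ.re ≤ B}) →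
          BddAbove ((fun ζ : ℂ => ‖Δ ζ‖ * ‖ζ‖ ^ m) '' {ζ : ℂ | A ≤ ζ.re ∧ ζ.re ≤ B}) →
          ∃ φ : ℂ → E,
            ContinuousOn φ {ζ : ℂ | A ≤ ζ.re ∧ ζ.re ≤ B + 2 * Real.pi * τ.im} ∧
            DifferentiableOn ℂ φ
              (interior {ζ : ℂ | A ≤ ζ.re ∧ ζ.re ≤ B + 2 * Real.pi * τ.im}) ∧
            (∀ ζ : ℂ, A ≤ ζ.re → ζ.re ≤ B →
              φ (ζ + (-(2 * (Real.pi : ℂ) * I * τ))) - φ ζ = Δ ζ) ∧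
            (∀ ζ : ℂ, A ≤ ζ.re → ζ.re ≤ B + 2 * Real.pi * τ.im →
              ‖φ ζ‖ ≤
                C * sSup ((fun ζ : ℂ => ‖Δ ζ‖ * ‖ζ‖ ^ m) '' {ζ : ℂ | A ≤ ζ.re ∧ ζ.re ≤ B}) *
                  (∫ s : ℝ, 1 / ‖(B : ℂ) + (s : ℂ) * I‖ ^ m)) := by
  obtain ⟨κ, hκ0, hκ⟩ := exists_solution_norm_le (E := E) hτ hd
  refine ⟨κ + 2 ^ m / (2 * b), by positivity, fun A B hAB hB Δ hc hdiff hbdd => ?_⟩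
  have hstrip (a c : ℝ) : interior {ζ : ℂ | a ≤ ζ.re ∧ ζ.re ≤ c} = re ⁻¹' Ioo a c := by
    rw [← interior_Icc, ← interior_preimage_re]
    rfl
  simp only [hstrip, one_div] at hdiff ⊢
  set N := sSup ((fun ζ : ℂ => ‖Δ ζ‖ * ‖ζ‖ ^ m) '' {ζ : ℂ | A ≤ ζ.re ∧ ζ.re ≤ B})
  have hN (ζ : ℂ) (hζ : ζ.re ∈ Icc A B) : ‖Δ ζ‖ * ‖ζ‖ ^ m ≤ N :=
    le_csSup hbdd (mem_image_of_mem _ hζ)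
  have hB0 : B < 0 := by linarith
  obtain ⟨φ, hφc, hφd, hφ_step, hφ_le⟩ := hκ A B hAB Δ
    (.of_norm_mul_pow_le hB0 hm hc hdiff hN) _ _
    (fun ζ hζ => norm_le_mul_integral hb hB hm hN hζ)
    (fun c hcAB => integral_norm_vertical_le hB0 hm hN hcAB)
  rw [step_re] at hφc hφd hφ_le
  refine ⟨φ, hφc, hφd, fun ζ hA hB => hφ_step ζ ⟨hA, hB⟩, fun ζ hA hB => ?_⟩
  exact (hφ_le ζ ⟨hA, hB⟩).trans_eq (by ring)

end

/-- a uniform bound for solutions of the difference equation. For `m ≥ 3` and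
`d > λ₁` there is `C > 0` (depending only on `τ`, `m`, `d`) such that for all strips
`{A ≤ Re ζ ≤ B}` with `B − A = d`, `B ≤ −1`, and every `Δ` holomorphic there with
`‖Δ‖_m < ∞`, there is a holomorphic solution `φ` of `φ(ζ+λ) − φ(ζ) = Δ(ζ)` on the
enlarged strip with `sup |φ| ≤ C·‖Δ‖_m·I_m`, where `I_m = ∫_ℝ ds/|B+is|^m` and
`λ = −2πiτ`, `λ₁ = 2π·Im τ`. -/
theorem statement11 (τ : ℂ) (hτ : 0 < τ.im) (m : ℕ) (hm : 3 ≤ m)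
    (d : ℝ) (hd : 2 * Real.pi * τ.im < d) :
    ∃ C : ℝ, 0 < C ∧
      ∀ A B : ℝ, B - A = d → B ≤ -1 →
        ∀ Δ : ℂ → ℂ,
          ContinuousOn Δ {ζ : ℂ | A ≤ ζ.re ∧ ζ.re ≤ B} →
          DifferentiableOn ℂ Δ (interior {ζ : ℂ | A ≤ ζ.re ∧ ζ.re ≤ B}) →
          BddAbove ((fun ζ : ℂ => ‖Δ ζ‖ * ‖ζ‖ ^ m) ''
            {ζ : ℂ | A ≤ ζ.re ∧ ζ.re ≤ B}) →
          ∃ φ : ℂ → ℂ,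
            ContinuousOn φ {ζ : ℂ | A ≤ ζ.re ∧ ζ.re ≤ B + 2 * Real.pi * τ.im} ∧
            DifferentiableOn ℂ φ
              (interior {ζ : ℂ | A ≤ ζ.re ∧ ζ.re ≤ B + 2 * Real.pi * τ.im}) ∧
            (∀ ζ : ℂ, A ≤ ζ.re → ζ.re ≤ B →
              φ (ζ + (-(2 * (Real.pi : ℂ) * Complex.I * τ))) - φ ζ = Δ ζ) ∧
            (∀ ζ : ℂ, A ≤ ζ.re → ζ.re ≤ B + 2 * Real.pi * τ.im →
              ‖φ ζ‖ ≤
                C * sSup ((fun ζ : ℂ => ‖Δ ζ‖ * ‖ζ‖ ^ m) ''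
                    {ζ : ℂ | A ≤ ζ.re ∧ ζ.re ≤ B}) *
                  (∫ s : ℝ, 1 / ‖(B : ℂ) + (s : ℂ) * Complex.I‖ ^ m)) :=
  statement11_general hτ (by omega) ((by positivity : 0 < 2 * Real.pi * τ.im).trans hd) one_pos
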